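/- Let {ε_n} be a sequence in (0,1) with ε_n → 0 and n·ε_n → ∞, let a ∈ ℝ and t₀ > 0, and set B_n = {p prime : e^{(n+a)/t₀} < p ≤ e^{(n+a+ε_n)/t₀}}. Then there exist constants 0 < c₁ ≤ c₂ < ∞ such that c₁ ε_n/n ≤ ∑_{p ∈ B_n} 1/p ≤ c₂ ε_n/n for all sufficiently large n. -/

import Mathlib

open Real Filter

/-!
The product inequality `3 + 4 cos θ + cos 2θ ≥ 0` bounds `ζ₁ s = (s - 1) ζ s` from below just to
the right of the line `Re s = 1` by a power of `|Im s|`, and shifting slightly to the left costs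
little, so that by Cauchy's estimates every derivative of `ζ₁' / ζ₁` is `O(|Im s|)` there. These
derivatives are the Fourier transforms of `xᵏ (dμ - dx)`, where `μ = ∑ Λ n / n • δ_{log n}`. By
Fourier inversion, `xᵏ dμ` and `xᵏ dx` agree on a smooth bump of width `h` up to `O(1 + 1 / h)`.
For `k = 2` the main term near `X` is of size `X² h`, which dominates as soon as `X h` is large;
hence `μ (Y, Y + h] ≍ h`. Discarding prime powers and dividing by `log p ∼ Y` gives the result.
-/

section ZetaSeries

theorem norm_ofReal_cpow_neg_sub_le_two_mul {m u : ℝ} (hm : 0 < m) (hu : m ≤ u) {s : ℂ}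
    (hs : 0 ≤ s.re) : ‖(m : ℂ) ^ (-s) - (u : ℂ) ^ (-s)‖ ≤ 2 * m ^ (-s.re) := by
  have hmono : u ^ (-s.re) ≤ m ^ (-s.re) := rpow_le_rpow_of_nonpos hm hu (by simpa using hs)
  calc ‖(m : ℂ) ^ (-s) - (u : ℂ) ^ (-s)‖ ≤ ‖(m : ℂ) ^ (-s)‖ + ‖(u : ℂ) ^ (-s)‖ := norm_sub_le _ _
    _ = m ^ (-s.re) + u ^ (-s.re) := by
      rw [Complex.norm_cpow_eq_rpow_re_of_pos hm,
        Complex.norm_cpow_eq_rpow_re_of_pos (hm.trans_le hu), Complex.neg_re]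
    _ ≤ 2 * m ^ (-s.re) := by linarith

theorem norm_ofReal_cpow_neg_sub_le_mul_div {m u : ℝ} (hm : 0 < m) (hu : u ∈ Set.Icc m (m + 1))
    {s : ℂ} (hs : 0 ≤ s.re) :
    ‖(m : ℂ) ^ (-s) - (u : ℂ) ^ (-s)‖ ≤ m ^ (-s.re) * (‖s‖ / m) := by
  have hderiv : ∀ x ∈ Set.Icc m (m + 1), HasDerivWithinAt (fun y : ℝ ↦ (y : ℂ) ^ (-s))
      (-s * (x : ℂ) ^ (-s - 1)) (Set.Icc m (m + 1)) x := fun x hx ↦ by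
    have hx0 : (x : ℂ) ∈ Complex.slitPlane := by simpa using hm.trans_le hx.1
    simpa using ((hasDerivAt_id (x : ℂ)).cpow_const (c := -s) hx0).comp_ofReal.hasDerivWithinAt
  have hbound : ∀ x ∈ Set.Icc m (m + 1), ‖-s * (x : ℂ) ^ (-s - 1)‖ ≤ m ^ (-s.re) * (‖s‖ / m) := by
    intro x hx
    have hmono : x ^ (-s.re - 1) ≤ m ^ (-s.re - 1) :=
      rpow_le_rpow_of_nonpos hm hx.1 (by linarith)
    rw [norm_mul, norm_neg, Complex.norm_cpow_eq_rpow_re_of_pos (hm.trans_le hx.1), Complex.sub_re,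
      Complex.neg_re, Complex.one_re]
    calc ‖s‖ * x ^ (-s.re - 1) ≤ ‖s‖ * m ^ (-s.re - 1) := by gcongr
      _ = m ^ (-s.re) * (‖s‖ / m) := by rw [rpow_sub_one hm.ne']; ring
  have hlen : ‖m - u‖ ≤ 1 := by
    rw [Real.norm_eq_abs, abs_le]; constructor <;> linarith [hu.1, hu.2]
  exact (Convex.norm_image_sub_le_of_norm_hasDerivWithin_le hderiv hbound (convex_Icc _ _) hu
    (Set.left_mem_Icc.2 (by linarith))).trans (mul_le_of_le_one_right (by positivity) hlen)

theorem norm_ofReal_cpow_neg_sub_le {m u : ℝ} (hm : 0 < m) (hu : u ∈ Set.Icc m (m + 1)) {s : ℂ}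
    (hs : 0 ≤ s.re) {α : ℝ} (hα : α ∈ Set.Icc (0 : ℝ) 1) :
    ‖(m : ℂ) ^ (-s) - (u : ℂ) ^ (-s)‖ ≤ 2 * m ^ (-s.re) * (‖s‖ / m) ^ α := by
  have : 0 ≤ m ^ (-s.re) := by positivity
  rcases le_total 1 (‖s‖ / m) with hlarge | hsmall
  · exact (norm_ofReal_cpow_neg_sub_le_two_mul hm hu.1 hs).trans
      (le_mul_of_one_le_right (by positivity) (one_le_rpow hlarge hα.1))
  · calc ‖(m : ℂ) ^ (-s) - (u : ℂ) ^ (-s)‖ ≤ m ^ (-s.re) * (‖s‖ / m) :=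
          norm_ofReal_cpow_neg_sub_le_mul_div hm hu hs
      _ ≤ m ^ (-s.re) * (‖s‖ / m) ^ α := by
          gcongr; exact self_le_rpow_of_le_one (by positivity) hsmall hα.2
      _ ≤ 2 * m ^ (-s.re) * (‖s‖ / m) ^ α := by
          rw [mul_assoc]; exact le_mul_of_one_le_left (by positivity) one_le_two

/-- The `n`-th term of the series `ζ₁ s - 1 = ∑ zetaDefect n s` for `ζ₁ s = (s - 1) * ζ s`: it is
`s - 1` times the error `∫ u in n+1..n+2, (n + 1) ^ (-s) - u ^ (-s)` made when the term
`(n + 1) ^ (-s)` of the zeta series is replaced by an integral. -/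
noncomputable def zetaDefect (n : ℕ) (s : ℂ) : ℂ :=
  ((n : ℂ) + 2) ^ (1 - s) - ((n : ℂ) + 1) ^ (1 - s) + (s - 1) * ((n : ℂ) + 1) ^ (-s)

theorem differentiable_zetaDefect (n : ℕ) : Differentiable ℂ (zetaDefect n) := by
  have h1 : (n : ℂ) + 1 ≠ 0 := by exact_mod_cast n.succ_ne_zero
  have h2 : (n : ℂ) + 2 ≠ 0 := by exact_mod_cast (n + 1).succ_ne_zero
  exact ((Differentiable.const_cpow (by fun_prop) (.inl h2)).sub
    (Differentiable.const_cpow (by fun_prop) (.inl h1))).add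
      (Differentiable.mul (by fun_prop) (Differentiable.const_cpow (by fun_prop) (.inl h1)))

theorem norm_zetaDefect_le (n : ℕ) {s : ℂ} (hs : 0 ≤ s.re) {α : ℝ} (hα : α ∈ Set.Icc (0 : ℝ) 1) :
    ‖zetaDefect n s‖ ≤ 2 * ‖s - 1‖ * ‖s‖ ^ α * ((n : ℝ) + 1) ^ (-(s.re + α)) := by
  rcases eq_or_ne s 1 with rfl | _
  · simp [zetaDefect]
  set m : ℝ := n + 1 with hm
  have hm0 : 0 < m := by positivity
  have hderiv : ∀ x ∈ Set.Icc m (m + 1),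
      HasDerivWithinAt (fun y : ℝ ↦ (y : ℂ) ^ (1 - s) + (s - 1) * y * (m : ℂ) ^ (-s))
        ((s - 1) * ((m : ℂ) ^ (-s) - (x : ℂ) ^ (-s))) (Set.Icc m (m + 1)) x := fun x hx ↦ by
    have hx0 : (x : ℂ) ∈ Complex.slitPlane := by simpa using hm0.trans_le hx.1
    have := (((hasDerivAt_id (x : ℂ)).cpow_const (c := 1 - s) hx0).add
      (((hasDerivAt_id (x : ℂ)).const_mul (s - 1)).mul_const ((m : ℂ) ^ (-s)))).comp_ofReal
    refine (this.congr_deriv ?_).hasDerivWithinAt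
    rw [id, show 1 - s - 1 = -s by ring]
    ring
  have hbound : ∀ x ∈ Set.Icc m (m + 1), ‖(s - 1) * ((m : ℂ) ^ (-s) - (x : ℂ) ^ (-s))‖ ≤
      ‖s - 1‖ * (2 * m ^ (-s.re) * (‖s‖ / m) ^ α) := fun x hx ↦ by
    rw [norm_mul]
    gcongr
    exact norm_ofReal_cpow_neg_sub_le hm0 hx hs hα
  have hle := Convex.norm_image_sub_le_of_norm_hasDerivWithin_le hderiv hbound (convex_Icc _ _)
    (Set.left_mem_Icc.2 (by linarith)) (Set.right_mem_Icc.2 (by linarith))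
  have hdefect : zetaDefect n s =
      ((m + 1 : ℝ) : ℂ) ^ (1 - s) + (s - 1) * (m + 1 : ℝ) * (m : ℂ) ^ (-s) -
        ((m : ℂ) ^ (1 - s) + (s - 1) * m * (m : ℂ) ^ (-s)) := by
    rw [zetaDefect, hm, show (n : ℂ) + 2 = ((n + 1 + 1 : ℝ) : ℂ) by push_cast; ring]
    push_cast
    ring
  rw [hdefect]
  refine hle.trans_eq ?_
  rw [add_sub_cancel_left, norm_one, mul_one, div_rpow (norm_nonneg s) hm0.le, neg_add,
    rpow_add hm0, rpow_neg hm0.le α]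
  ring

theorem summable_nat_add_one_rpow_neg {p : ℝ} (hp : 1 < p) :
    Summable fun n : ℕ ↦ ((n : ℝ) + 1) ^ (-p) := by
  simpa using (summable_nat_add_iff 1).2 (Real.summable_nat_rpow.2 (by linarith : -p < -1))

theorem summable_norm_zetaDefect {s : ℂ} (hs : 0 < s.re) : Summable fun n ↦ ‖zetaDefect n s‖ :=
  .of_nonneg_of_le (fun _ ↦ norm_nonneg _)
    (fun n ↦ norm_zetaDefect_le n hs.le ⟨zero_le_one, le_rfl⟩)
    ((summable_nat_add_one_rpow_neg (by linarith)).mul_left _)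

theorem hasSum_zetaDefect_of_one_lt_re {s : ℂ} (hs : 1 < s.re) :
    HasSum (zetaDefect · s) (riemannZeta₁ s - 1) := by
  have hs1 : s ≠ 1 := by rintro rfl; simp at hs
  have hzeta : HasSum (fun n : ℕ ↦ (s - 1) * ((n : ℂ) + 1) ^ (-s)) (riemannZeta₁ s) := by
    have hsum : Summable fun n : ℕ ↦ 1 / ((n : ℂ) + 1) ^ s := by
      simpa using (summable_nat_add_iff 1).2 (Complex.summable_one_div_nat_cpow.2 hs)
    have := hsum.hasSum.mul_left (s - 1)
    rw [← zeta_eq_tsum_one_div_nat_add_one_cpow hs, riemannZeta_eq_inv_sub_mul hs1,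
      mul_inv_cancel_left₀ (sub_ne_zero.2 hs1)] at this
    simpa only [one_div, ← Complex.cpow_neg] using this
  have htail : Tendsto (fun N : ℕ ↦ ((N : ℂ) + 1) ^ (1 - s)) atTop (nhds 0) := by
    rw [tendsto_zero_iff_norm_tendsto_zero]
    have hnorm (N : ℕ) : ‖((N : ℂ) + 1) ^ (1 - s)‖ = ((N : ℝ) + 1) ^ (-(s.re - 1)) := by
      rw [← Nat.cast_succ, ← Complex.ofReal_natCast,
        Complex.norm_cpow_eq_rpow_re_of_pos (by positivity)]
      simp
    simp_rw [hnorm]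
    exact (tendsto_rpow_neg_atTop (by linarith)).comp
      (tendsto_atTop_add_const_right _ _ tendsto_natCast_atTop_atTop)
  rw [hasSum_iff_tendsto_nat_of_summable_norm (summable_norm_zetaDefect (by linarith))]
  have hlim := (htail.sub_const 1).add hzeta.tendsto_sum_nat
  rw [zero_sub, neg_add_eq_sub] at hlim
  refine hlim.congr fun N ↦ ?_
  have htel := Finset.sum_range_sub (fun n : ℕ ↦ ((n : ℂ) + 1) ^ (1 - s)) N
  rw [Nat.cast_zero, zero_add, Complex.one_cpow] at htel
  rw [← htel, ← Finset.sum_add_distrib]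
  refine Finset.sum_congr rfl fun n _ ↦ ?_
  rw [zetaDefect, Nat.cast_succ, add_assoc (n : ℂ), one_add_one_eq_two]

theorem differentiableOn_tsum_zetaDefect {σ : ℝ} (hσ : 0 < σ) (R : ℝ) :
    DifferentiableOn ℂ (fun s ↦ ∑' n, zetaDefect n s) ({s | σ < s.re} ∩ Metric.ball 0 R) := by
  refine Complex.differentiableOn_tsum_of_summable_norm
    (u := fun n : ℕ ↦ 2 * (R + 1) * R ^ (1 : ℝ) * ((n : ℝ) + 1) ^ (-(σ + 1)))
    ((summable_nat_add_one_rpow_neg (by linarith)).mul_left _)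
    (fun n ↦ (differentiable_zetaDefect n).differentiableOn)
    ((isOpen_lt continuous_const Complex.continuous_re).inter Metric.isOpen_ball) ?_
  rintro n s ⟨hre, hball⟩
  rw [Set.mem_ofPred_eq] at hre
  have hsR : ‖s‖ ≤ R := (mem_ball_zero_iff.1 hball).le
  have hsR1 : ‖s - 1‖ ≤ R + 1 := (norm_sub_le _ _).trans (by simpa using hsR)
  refine (norm_zetaDefect_le n (hσ.trans hre).le ⟨zero_le_one, le_rfl⟩).trans ?_
  have hR : 0 ≤ R := (norm_nonneg s).trans hsR
  gcongr
  linarith [n.cast_nonneg (α := ℝ)]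

theorem riemannZeta₁_eq_one_add_tsum {s : ℂ} (hs : 0 < s.re) :
    riemannZeta₁ s = 1 + ∑' n, zetaDefect n s := by
  obtain ⟨σ, hσ0, hσ⟩ := exists_between (lt_min hs one_pos)
  rw [lt_min_iff] at hσ
  set U : Set ℂ := {z | σ < z.re} ∩ Metric.ball 0 (‖s‖ + 3)
  have hUo : IsOpen U :=
    (isOpen_lt continuous_const Complex.continuous_re).inter Metric.isOpen_ball
  have hUc : Convex ℝ U := (convex_halfSpace_re_gt _).inter (convex_ball _ _)
  have hzeta : AnalyticOnNhd ℂ riemannZeta₁ U :=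
    (Differentiable.differentiableOn (by fun_prop)).analyticOnNhd hUo
  have hseries : AnalyticOnNhd ℂ (fun z ↦ 1 + ∑' n, zetaDefect n z) U :=
    ((differentiableOn_tsum_zetaDefect hσ0 _).const_add 1).analyticOnNhd hUo
  refine hzeta.eqOn_of_preconnected_of_eventuallyEq hseries hUc.isPreconnected (z₀ := 2)
    ⟨by simpa using hσ.2.trans one_lt_two, by simp; linarith [norm_nonneg s]⟩ ?_ ⟨hσ.1, by simp⟩
  filter_upwards [(isOpen_lt continuous_const Complex.continuous_re).mem_nhds
    (show (1 : ℝ) < (2 : ℂ).re by simp)] with z hz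
  rw [(hasSum_zetaDefect_of_one_lt_re hz).tsum_eq, add_sub_cancel]

theorem exists_norm_riemannZeta₁_sub_one_le {α : ℝ} (hα : α ∈ Set.Ioc (0 : ℝ) 1) :
    ∃ C > 0, ∀ s : ℂ, 1 - α / 2 ≤ s.re →
      ‖riemannZeta₁ s - 1‖ ≤ C * (‖s - 1‖ * ‖s‖ ^ α) := by
  obtain ⟨hα0, hα1⟩ := hα
  have hsum := summable_nat_add_one_rpow_neg (p := 1 + α / 2) (by linarith)
  refine ⟨2 * ∑' n : ℕ, ((n : ℝ) + 1) ^ (-(1 + α / 2)),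
    mul_pos two_pos (hsum.tsum_pos (fun _ ↦ by positivity) 0 (by simp)), fun s hs ↦ ?_⟩
  have hterm (n : ℕ) : ‖zetaDefect n s‖ ≤
      2 * ‖s - 1‖ * ‖s‖ ^ α * ((n : ℝ) + 1) ^ (-(1 + α / 2)) := by
    refine (norm_zetaDefect_le n (by linarith) ⟨hα0.le, hα1⟩).trans ?_
    exact mul_le_mul_of_nonneg_left (rpow_le_rpow_of_exponent_le (by simp) (by linarith))
      (by positivity)
  rw [riemannZeta₁_eq_one_add_tsum (by linarith), add_sub_cancel_left]
  exact (tsum_of_norm_bounded (hsum.hasSum.mul_left _) hterm).trans_eq (by ring)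

end ZetaSeries

section ZetaGrowth

theorem exists_norm_riemannZeta₁_le {α : ℝ} (hα : α ∈ Set.Ioc (0 : ℝ) 1) :
    ∃ C > 0, ∀ s : ℂ, s.re ∈ Set.Icc (1 - α / 2) 3 →
      ‖riemannZeta₁ s‖ ≤ C * (3 + |s.im|) ^ (1 + α) := by
  obtain ⟨C, hC, hbound⟩ := exists_norm_riemannZeta₁_sub_one_le hα
  refine ⟨C + 1, by linarith, fun s hs ↦ ?_⟩
  have hre : |s.re| ≤ 3 ∧ |s.re - 1| ≤ 3 := by
    constructor <;> rw [abs_le] <;> constructor <;> linarith [hs.1, hs.2, hα.2]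
  have hnorm : ‖s‖ ≤ 3 + |s.im| :=
    (Complex.norm_le_abs_re_add_abs_im s).trans (by linarith [hre.1])
  have hnorm1 : ‖s - 1‖ ≤ 3 + |s.im| :=
    (Complex.norm_le_abs_re_add_abs_im (s - 1)).trans (by simpa using hre.2)
  have hone : 1 ≤ (3 + |s.im|) ^ (1 + α) :=
    one_le_rpow (by linarith [abs_nonneg s.im]) (by linarith [hα.1])
  calc ‖riemannZeta₁ s‖ ≤ ‖riemannZeta₁ s - 1‖ + 1 := by
        simpa using norm_add_le (riemannZeta₁ s - 1) 1
    _ ≤ C * ((3 + |s.im|) * (3 + |s.im|) ^ α) + 1 := by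
        have := hα.1.le
        grw [hbound s hs.1, hnorm1, hnorm]
    _ = C * (3 + |s.im|) ^ (1 + α) + 1 := by rw [rpow_add (by positivity), rpow_one]
    _ ≤ (C + 1) * (3 + |s.im|) ^ (1 + α) := by linarith

theorem abs_im_le_two_mul_add_three {s z : ℂ} (h : ‖z - s‖ ≤ 1) : |z.im| ≤ 2 * |s.im| + 3 := by
  have him : |z.im - s.im| ≤ 1 := by simpa using (Complex.abs_im_le_norm (z - s)).trans h
  linarith [abs_sub_abs_le_abs_sub z.im s.im, abs_nonneg s.im]

theorem three_add_abs_rpow_le {t u : ℝ} (h : |t| ≤ 2 * |u| + 3) {p : ℝ}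
    (hp : p ∈ Set.Icc (0 : ℝ) 2) : (3 + |t|) ^ p ≤ 4 * (3 + |u|) ^ p := by
  have htwo : (2 : ℝ) ^ p ≤ 4 := by
    calc (2 : ℝ) ^ p ≤ 2 ^ (2 : ℝ) := rpow_le_rpow_of_exponent_le one_le_two hp.2
      _ = 4 := by norm_num
  calc (3 + |t|) ^ p ≤ (2 * (3 + |u|)) ^ p := rpow_le_rpow (by positivity) (by linarith) hp.1
    _ = 2 ^ p * (3 + |u|) ^ p := mul_rpow zero_le_two (by positivity)
    _ ≤ 4 * (3 + |u|) ^ p := by gcongr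

theorem exists_norm_deriv_riemannZeta₁_le {α : ℝ} (hα : α ∈ Set.Ioc (0 : ℝ) 1) :
    ∃ C > 0, ∀ s : ℂ, s.re ∈ Set.Icc (1 - α / 4) (5 / 2) →
      ‖deriv riemannZeta₁ s‖ ≤ C * (3 + |s.im|) ^ (1 + α) := by
  obtain ⟨C, hC, hbound⟩ := exists_norm_riemannZeta₁_le hα
  obtain ⟨hα0, hα1⟩ := hα
  refine ⟨C * 4 / (α / 4), by positivity, fun s hs ↦ ?_⟩
  have hsphere : ∀ z ∈ Metric.sphere s (α / 4),
      ‖riemannZeta₁ z‖ ≤ C * 4 * (3 + |s.im|) ^ (1 + α) := by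
    intro z hz
    have hdist : ‖z - s‖ = α / 4 := by simpa [dist_eq_norm] using hz
    have hre := abs_le.1 ((Complex.abs_re_le_norm (z - s)).trans hdist.le)
    rw [Complex.sub_re] at hre
    calc ‖riemannZeta₁ z‖ ≤ C * (3 + |z.im|) ^ (1 + α) :=
          hbound z ⟨by linarith [hs.1, hre.1], by linarith [hs.2, hre.2]⟩
      _ ≤ C * (4 * (3 + |s.im|) ^ (1 + α)) := by
          gcongr
          exact three_add_abs_rpow_le (abs_im_le_two_mul_add_three (by linarith))
            ⟨by linarith, by linarith⟩
      _ = C * 4 * (3 + |s.im|) ^ (1 + α) := by ring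
  exact (Complex.norm_deriv_le_of_forall_mem_sphere_norm_le (by positivity)
    (Differentiable.diffContOnCl (by fun_prop)) hsphere).trans_eq (by ring)

theorem exists_norm_riemannZeta₁_sub_le {α : ℝ} (hα : α ∈ Set.Ioc (0 : ℝ) 1) :
    ∃ C > 0, ∀ s z : ℂ, s.re ∈ Set.Icc (1 - α / 4) (5 / 2) → z.re ∈ Set.Icc (1 - α / 4) (5 / 2) →
      ‖z - s‖ ≤ 1 → ‖riemannZeta₁ z - riemannZeta₁ s‖ ≤ C * (3 + |s.im|) ^ (1 + α) * ‖z - s‖ := by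
  obtain ⟨C, hC, hderiv⟩ := exists_norm_deriv_riemannZeta₁_le hα
  refine ⟨C * 4, by positivity, fun s z hs hz hzs ↦ ?_⟩
  have hconvex : Convex ℝ (Complex.re ⁻¹' Set.Icc (1 - α / 4) (5 / 2) ∩ Metric.closedBall s 1) :=
    ((convex_Icc _ _).linear_preimage Complex.reLm).inter (convex_closedBall s 1)
  refine hconvex.norm_image_sub_le_of_norm_deriv_le (fun w _ ↦ by fun_prop) (fun w hw ↦ ?_)
    ⟨hs, by simp⟩ ⟨hz, mem_closedBall_iff_norm.2 hzs⟩
  calc ‖deriv riemannZeta₁ w‖ ≤ C * (3 + |w.im|) ^ (1 + α) := hderiv w hw.1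
    _ ≤ C * (4 * (3 + |s.im|) ^ (1 + α)) := by
        gcongr
        exact three_add_abs_rpow_le (abs_im_le_two_mul_add_three (mem_closedBall_iff_norm.1 hw.2))
          ⟨by linarith [hα.1], by linarith [hα.2]⟩
    _ = C * 4 * (3 + |s.im|) ^ (1 + α) := by ring

end ZetaGrowth

section ZetaLowerBound

theorem pow_mul_norm_le_norm_riemannZeta₁_product {x y : ℝ} (hx : 0 < x) :
    x ^ 3 * ‖(x + Complex.I * y : ℂ)‖ ^ 4 * ‖(x + 2 * Complex.I * y : ℂ)‖ ≤
      ‖riemannZeta₁ (1 + x)‖ ^ 3 * ‖riemannZeta₁ (1 + x + Complex.I * y)‖ ^ 4 *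
        ‖riemannZeta₁ (1 + x + 2 * Complex.I * y)‖ := by
  have hzeta (w : ℂ) (hw : 0 < w.re) :
      0 < ‖w‖ ∧ ‖riemannZeta (1 + w)‖ = ‖riemannZeta₁ (1 + w)‖ / ‖w‖ := by
    have hw0 : w ≠ 0 := by rintro rfl; simp at hw
    refine ⟨norm_pos_iff.2 hw0, ?_⟩
    rw [riemannZeta_eq_inv_sub_mul (by simpa using hw0), add_sub_cancel_left, norm_mul, norm_inv,
      inv_mul_eq_div]
  obtain ⟨-, h0⟩ := hzeta x (by simpa using hx)
  obtain ⟨hpos1, h1⟩ := hzeta (x + Complex.I * y) (by simpa using hx)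
  obtain ⟨hpos2, h2⟩ := hzeta (x + 2 * Complex.I * y) (by simpa using hx)
  have hprod := DirichletCharacter.norm_LFunction_product_ge_one (N := 1) 1 hx y
  rw [one_pow, DirichletCharacter.LFunctionTrivChar, DirichletCharacter.LFunction_modOne_eq,
    norm_mul, norm_mul, norm_pow, norm_pow, add_assoc _ _ (Complex.I * y),
    add_assoc _ _ (2 * Complex.I * y), h0, h1, h2, Complex.norm_of_nonneg hx.le, div_pow, div_pow,
    div_mul_div_comm, div_mul_div_comm, ge_iff_le, one_le_div (by positivity)] at hprod
  simpa only [add_assoc] using hprod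

theorem exists_mul_pow_le_norm_riemannZeta₁_pow {α : ℝ} (hα : α ∈ Set.Ioc (0 : ℝ) 1) :
    ∃ c > 0, ∀ s : ℂ, s.re ∈ Set.Ioc (1 : ℝ) 2 → 1 ≤ |s.im| →
      c * (s.re - 1) ^ 3 * (3 + |s.im|) ^ (4 - α) ≤ ‖riemannZeta₁ s‖ ^ 4 := by
  obtain ⟨C, hC, hbound⟩ := exists_norm_riemannZeta₁_le hα
  obtain ⟨hα0, hα1⟩ := hα
  obtain ⟨D, hD, hD0⟩ : ∃ D, D = C * 3 ^ (1 + α) ∧ 0 < D := ⟨_, rfl, by positivity⟩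
  refine ⟨1 / (4 ^ 5 * D ^ 3 * (4 * C)), by positivity, fun s hs him ↦ ?_⟩
  obtain ⟨x, hx⟩ : ∃ x, x = s.re - 1 := ⟨_, rfl⟩
  obtain ⟨T, hT⟩ : ∃ T, T = 3 + |s.im| := ⟨_, rfl⟩
  have hx0 : 0 < x := by linarith [hs.1]
  have hT0 : 0 < T := by linarith
  have hs_eq : s = 1 + x + Complex.I * s.im := by
    apply Complex.ext <;> simp [hx]
  have hfactor1 : T / 4 ≤ ‖(x + Complex.I * s.im : ℂ)‖ := by
    have : |s.im| ≤ ‖(x + Complex.I * s.im : ℂ)‖ := by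
      simpa using Complex.abs_im_le_norm (x + Complex.I * s.im)
    linarith
  have hfactor2 : T / 4 ≤ ‖(x + 2 * Complex.I * s.im : ℂ)‖ := by
    have : 2 * |s.im| ≤ ‖(x + 2 * Complex.I * s.im : ℂ)‖ := by
      simpa [abs_mul] using Complex.abs_im_le_norm (x + 2 * Complex.I * s.im)
    linarith
  have hzeta0 : ‖riemannZeta₁ (1 + x)‖ ≤ D := by
    simpa [hD] using hbound (1 + x) ⟨by simp; linarith, by simp; linarith [hs.2]⟩
  have hzeta2 : ‖riemannZeta₁ (1 + x + 2 * Complex.I * s.im)‖ ≤ C * (4 * T ^ (1 + α)) := by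
    have him2 : (1 + x + 2 * Complex.I * s.im : ℂ).im = 2 * s.im := by simp
    refine (hbound _ ⟨by simp; linarith, by simp; linarith [hs.2]⟩).trans ?_
    rw [him2, hT]
    gcongr
    exact three_add_abs_rpow_le (by simp [abs_mul]) ⟨by linarith, by linarith⟩
  have hprod : x ^ 3 * (T / 4) ^ 4 * (T / 4) ≤
      D ^ 3 * ‖riemannZeta₁ s‖ ^ 4 * (C * (4 * T ^ (1 + α))) := by
    have := pow_mul_norm_le_norm_riemannZeta₁_product hx0 (y := s.im)
    rw [← hs_eq] at this
    grw [← hzeta0, ← hzeta2, ← this, hfactor1, hfactor2]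
  have hT5 : T ^ 5 = T ^ (4 - α) * T ^ (1 + α) := by
    rw [← rpow_add hT0, ← rpow_natCast]; congr 1; norm_num
  rw [← hx, ← hT]
  refine le_of_mul_le_mul_right ?_ (by positivity : 0 < 4 ^ 5 * (D ^ 3 * (C * (4 * T ^ (1 + α)))))
  calc 1 / (4 ^ 5 * D ^ 3 * (4 * C)) * x ^ 3 * T ^ (4 - α) *
        (4 ^ 5 * (D ^ 3 * (C * (4 * T ^ (1 + α))))) = x ^ 3 * (T ^ (4 - α) * T ^ (1 + α)) := by
        field_simp
    _ = 4 ^ 5 * (x ^ 3 * (T / 4) ^ 4 * (T / 4)) := by rw [← hT5]; ring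
    _ ≤ 4 ^ 5 * (D ^ 3 * ‖riemannZeta₁ s‖ ^ 4 * (C * (4 * T ^ (1 + α)))) := by gcongr
    _ = ‖riemannZeta₁ s‖ ^ 4 * (4 ^ 5 * (D ^ 3 * (C * (4 * T ^ (1 + α))))) := by ring

theorem exists_mul_rpow_le_norm_riemannZeta₁_of_le_re_sub_one {α : ℝ}
    (hα : α ∈ Set.Ioc (0 : ℝ) 1) :
    ∃ c > 0, ∀ s : ℂ, ∀ β > 0, s.re ∈ Set.Ioc (1 : ℝ) 2 → 1 ≤ |s.im| →
      β ^ 4 * (3 + |s.im|) ^ (-(5 * α)) ≤ s.re - 1 →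
        c * β ^ 3 * (3 + |s.im|) ^ (1 - 4 * α) ≤ ‖riemannZeta₁ s‖ := by
  obtain ⟨b, hb, hlower⟩ := exists_mul_pow_le_norm_riemannZeta₁_pow hα
  obtain ⟨c, hc, rfl⟩ : ∃ c > 0, b = c ^ 4 :=
    ⟨b ^ (1 / 4 : ℝ), by positivity, by rw [← rpow_natCast, ← rpow_mul hb.le]; norm_num⟩
  refine ⟨c, hc, fun s β hβ hs him hre ↦ le_of_pow_le_pow_left₀ four_ne_zero (norm_nonneg _) ?_⟩
  set T : ℝ := 3 + |s.im|
  have hT0 : 0 < T := by positivity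
  have hTpow : (T ^ (1 - 4 * α)) ^ 4 = (T ^ (-(5 * α))) ^ 3 * T ^ (4 - α) := by
    rw [← rpow_natCast, ← rpow_natCast, ← rpow_mul hT0.le, ← rpow_mul hT0.le, ← rpow_add hT0]
    congr 1; push_cast; ring
  calc (c * β ^ 3 * T ^ (1 - 4 * α)) ^ 4
      = c ^ 4 * (β ^ 4 * T ^ (-(5 * α))) ^ 3 * T ^ (4 - α) := by rw [mul_pow, hTpow]; ring
    _ ≤ c ^ 4 * (s.re - 1) ^ 3 * T ^ (4 - α) := by gcongr
    _ ≤ ‖riemannZeta₁ s‖ ^ 4 := hlower s hs him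

theorem exists_pos_le_mul_le {C r b : ℝ} (hC : 0 < C) (hr : 0 < r) (hb : 0 < b) :
    ∃ β > 0, β ≤ r ∧ C * β ≤ b :=
  ⟨min r (b / C), by positivity, min_le_left _ _,
    (le_div_iff₀' hC).1 (min_le_right r (b / C))⟩

theorem exists_mul_rpow_le_norm_riemannZeta₁_of_one_le_abs_im {α : ℝ}
    (hα : α ∈ Set.Ioc (0 : ℝ) 1) :
    ∃ c > 0, ∀ s : ℂ, s.re ∈ Set.Ioc (1 : ℝ) 2 → 1 ≤ |s.im| →
      c * (3 + |s.im|) ^ (1 - 4 * α) ≤ ‖riemannZeta₁ s‖ := by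
  obtain ⟨c, hc, hlower⟩ := exists_mul_rpow_le_norm_riemannZeta₁_of_le_re_sub_one hα
  obtain ⟨C, hC, hdiff⟩ := exists_norm_riemannZeta₁_sub_le hα
  obtain ⟨hα0, _⟩ := hα
  obtain ⟨β, hβ0, hβ1, hβ⟩ := exists_pos_le_mul_le hC one_pos (half_pos hc)
  refine ⟨c / 2 * β ^ 3, by positivity, fun s hs him ↦ ?_⟩
  obtain ⟨T, hT⟩ : ∃ T, T = 3 + |s.im| := ⟨_, rfl⟩
  have hT0 : 0 < T := by linarith
  obtain ⟨x, hx⟩ : ∃ x, x = β ^ 4 * T ^ (-(5 * α)) := ⟨_, rfl⟩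
  have hx0 : 0 < x := hx ▸ by positivity
  have hx1 : x ≤ 1 := hx ▸ mul_le_one₀ (pow_le_one₀ hβ0.le hβ1) (by positivity)
    (rpow_le_one_of_one_le_of_nonpos (by linarith) (by linarith))
  have hTpow : T ^ (1 + α) * T ^ (-(5 * α)) = T ^ (1 - 4 * α) := by
    rw [← rpow_add hT0]; ring_nf
  rw [← hT]
  rcases le_total x (s.re - 1) with hfar | hnear
  · calc c / 2 * β ^ 3 * T ^ (1 - 4 * α) ≤ c * β ^ 3 * T ^ (1 - 4 * α) := by gcongr; linarith
      _ ≤ ‖riemannZeta₁ s‖ := hT ▸ hlower s β hβ0 hs him (by rwa [← hT, ← hx])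
  set z : ℂ := ⟨1 + x, s.im⟩ with hz
  have hdist : ‖s - z‖ ≤ x := by
    have : s - z = ((s.re - (1 + x) : ℝ) : ℂ) := by apply Complex.ext <;> simp [hz]
    rw [this, Complex.norm_real, Real.norm_eq_abs, abs_le]
    constructor <;> linarith [hs.1]
  have hlower_z : c * β ^ 3 * T ^ (1 - 4 * α) ≤ ‖riemannZeta₁ z‖ := by
    have := hlower z β hβ0 ⟨by simp [hz, hx0], by simp [hz]; linarith⟩ him (by simp [hz, hx, hT])
    rwa [← hT] at this
  have hdiff_z : ‖riemannZeta₁ s - riemannZeta₁ z‖ ≤ c / 2 * β ^ 3 * T ^ (1 - 4 * α) :=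
    calc ‖riemannZeta₁ s - riemannZeta₁ z‖ ≤ C * T ^ (1 + α) * ‖s - z‖ :=
          hT ▸ hdiff z s ⟨by simp [hz]; linarith, by simp [hz]; linarith⟩
            ⟨by linarith [hs.1], by linarith [hs.2]⟩ (hdist.trans hx1)
      _ ≤ C * T ^ (1 + α) * (β ^ 4 * T ^ (-(5 * α))) := by rw [← hx]; gcongr
      _ = C * β * β ^ 3 * T ^ (1 - 4 * α) := by
          rw [← hTpow]; ring
      _ ≤ c / 2 * β ^ 3 * T ^ (1 - 4 * α) := by gcongr
  linarith [norm_sub_norm_le (riemannZeta₁ z) (riemannZeta₁ s),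
    norm_sub_rev (riemannZeta₁ z) (riemannZeta₁ s)]

theorem riemannZeta₁_ne_zero_of_one_le_re {s : ℂ} (hs : 1 ≤ s.re) : riemannZeta₁ s ≠ 0 := by
  rcases eq_or_ne s 1 with rfl | hs1
  · simp
  · exact fun h ↦ riemannZeta_ne_zero_of_one_le_re hs (by rw [riemannZeta_eq_inv_sub_mul hs1, h,
      mul_zero])

theorem exists_le_norm_riemannZeta₁_of_abs_im_le_one :
    ∃ c > 0, ∀ s : ℂ, s.re ∈ Set.Icc (1 : ℝ) 2 → |s.im| ≤ 1 → c ≤ ‖riemannZeta₁ s‖ := by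
  have hcompact : IsCompact (Set.Icc (1 : ℝ) 2 ×ℂ Set.Icc (-1 : ℝ) 1) :=
    isCompact_Icc.reProdIm isCompact_Icc
  obtain ⟨z, hz, hmin⟩ := hcompact.exists_isMinOn ⟨1, by simp [Complex.mem_reProdIm]⟩
    differentiable_riemannZeta₁.continuous.norm.continuousOn
  refine ⟨‖riemannZeta₁ z‖, norm_pos_iff.2 (riemannZeta₁_ne_zero_of_one_le_re hz.1.1),
    fun s hs him ↦ hmin ⟨hs, abs_le.1 him⟩⟩

theorem exists_mul_rpow_le_norm_riemannZeta₁ {α : ℝ} (hα : α ∈ Set.Ioc (0 : ℝ) 1) :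
    ∃ c > 0, ∀ s : ℂ, s.re ∈ Set.Ioc (1 : ℝ) 2 →
      c * (3 + |s.im|) ^ (1 - 4 * α) ≤ ‖riemannZeta₁ s‖ := by
  obtain ⟨c, hc, hlarge⟩ := exists_mul_rpow_le_norm_riemannZeta₁_of_one_le_abs_im hα
  obtain ⟨d, hd, hsmall⟩ := exists_le_norm_riemannZeta₁_of_abs_im_le_one
  refine ⟨min c (d / 4), by positivity, fun s hs ↦ ?_⟩
  rcases le_total 1 |s.im| with him | him
  · calc min c (d / 4) * (3 + |s.im|) ^ (1 - 4 * α) ≤ c * (3 + |s.im|) ^ (1 - 4 * α) := by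
          gcongr; exact min_le_left _ _
      _ ≤ ‖riemannZeta₁ s‖ := hlarge s hs him
  · have hpow : (3 + |s.im|) ^ (1 - 4 * α) ≤ 4 := by
      calc (3 + |s.im|) ^ (1 - 4 * α) ≤ (3 + |s.im|) ^ (1 : ℝ) :=
            rpow_le_rpow_of_exponent_le (by linarith [abs_nonneg s.im]) (by linarith [hα.1])
        _ ≤ 4 := by rw [rpow_one]; linarith
    calc min c (d / 4) * (3 + |s.im|) ^ (1 - 4 * α) ≤ d / 4 * 4 := by
          gcongr; exact min_le_right _ _
      _ = d := by ring
      _ ≤ ‖riemannZeta₁ s‖ := hsmall s ⟨hs.1.le, hs.2⟩ him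

end ZetaLowerBound

section LogDeriv

theorem exists_mul_rpow_le_norm_riemannZeta₁_of_norm_sub_le {α : ℝ} (hα : α ∈ Set.Ioc (0 : ℝ) 1) :
    ∃ c > 0, ∃ δ > 0, ∀ s z : ℂ, s.re ∈ Set.Ioc (1 : ℝ) 2 →
      ‖z - s‖ ≤ δ * (3 + |s.im|) ^ (-(5 * α)) →
        z.re ∈ Set.Icc (1 - α / 4) (5 / 2) ∧ ‖z - s‖ ≤ 1 ∧
          c * (3 + |s.im|) ^ (1 - 4 * α) ≤ ‖riemannZeta₁ z‖ := by
  obtain ⟨c, hc, hlower⟩ := exists_mul_rpow_le_norm_riemannZeta₁ hα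
  obtain ⟨A, hA, hdiff⟩ := exists_norm_riemannZeta₁_sub_le hα
  obtain ⟨hα0, hα1⟩ := hα
  obtain ⟨δ, hδ0, hδα, hδ⟩ := exists_pos_le_mul_le hA (by positivity : 0 < α / 4) (half_pos hc)
  refine ⟨c / 2, half_pos hc, δ, hδ0, fun s z hs hzs ↦ ?_⟩
  obtain ⟨T, hT⟩ : ∃ T, T = 3 + |s.im| := ⟨_, rfl⟩
  have hT0 : 0 < T := hT ▸ by positivity
  have hT1 : T ^ (-(5 * α)) ≤ 1 :=
    rpow_le_one_of_one_le_of_nonpos (by linarith [abs_nonneg s.im]) (by linarith)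
  rw [← hT] at hzs ⊢
  have hzα : ‖z - s‖ ≤ α / 4 := hzs.trans ((mul_le_of_le_one_right hδ0.le hT1).trans hδα)
  have hz : z.re ∈ Set.Icc (1 - α / 4) (5 / 2) := by
    have := abs_le.1 ((Complex.abs_re_le_norm (z - s)).trans hzα)
    rw [Complex.sub_re] at this
    constructor <;> linarith [hs.1, hs.2]
  refine ⟨hz, by linarith, ?_⟩
  have hclose : ‖riemannZeta₁ z - riemannZeta₁ s‖ ≤ c / 2 * T ^ (1 - 4 * α) :=
    calc ‖riemannZeta₁ z - riemannZeta₁ s‖ ≤ A * T ^ (1 + α) * ‖z - s‖ :=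
          hT ▸ hdiff s z ⟨by linarith [hs.1], by linarith [hs.2]⟩ hz (by linarith)
      _ ≤ A * T ^ (1 + α) * (δ * T ^ (-(5 * α))) := by gcongr
      _ = A * δ * T ^ (1 - 4 * α) := by
          rw [show 1 - 4 * α = (1 + α) + -(5 * α) by ring, rpow_add hT0 (1 + α)]; ring
      _ ≤ c / 2 * T ^ (1 - 4 * α) := by gcongr
  linarith [hT ▸ hlower s hs, norm_sub_norm_le (riemannZeta₁ s) (riemannZeta₁ z),
    norm_sub_rev (riemannZeta₁ z) (riemannZeta₁ s)]

theorem exists_norm_logDeriv_riemannZeta₁_le {α : ℝ} (hα : α ∈ Set.Ioc (0 : ℝ) 1) :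
    ∃ C > 0, ∃ δ > 0, ∀ s z : ℂ, s.re ∈ Set.Ioc (1 : ℝ) 2 →
      ‖z - s‖ ≤ δ * (3 + |s.im|) ^ (-(5 * α)) →
        riemannZeta₁ z ≠ 0 ∧ ‖logDeriv riemannZeta₁ z‖ ≤ C * (3 + |s.im|) ^ (5 * α) := by
  obtain ⟨c, hc, δ, hδ, hlower⟩ := exists_mul_rpow_le_norm_riemannZeta₁_of_norm_sub_le hα
  obtain ⟨B, hB, hderiv⟩ := exists_norm_deriv_riemannZeta₁_le hα
  refine ⟨4 * B / c, by positivity, δ, hδ, fun s z hs hzs ↦ ?_⟩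
  obtain ⟨hz, hzs1, hlower_z⟩ := hlower s z hs hzs
  obtain ⟨T, hT⟩ : ∃ T, T = 3 + |s.im| := ⟨_, rfl⟩
  have hT0 : 0 < T := hT ▸ by positivity
  rw [← hT] at hlower_z ⊢
  have hderiv_z : ‖deriv riemannZeta₁ z‖ ≤ B * (4 * T ^ (1 + α)) := by
    rw [hT]
    grw [hderiv z hz, three_add_abs_rpow_le (abs_im_le_two_mul_add_three hzs1)
      ⟨by linarith [hα.1], by linarith [hα.2]⟩]
  refine ⟨norm_pos_iff.1 (lt_of_lt_of_le (by positivity) hlower_z), ?_⟩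
  rw [logDeriv_apply, norm_div]
  calc ‖deriv riemannZeta₁ z‖ / ‖riemannZeta₁ z‖
      ≤ B * (4 * T ^ (1 + α)) / (c * T ^ (1 - 4 * α)) := by gcongr
    _ = 4 * B / c * T ^ (5 * α) := by
        rw [show 1 + α = 5 * α + (1 - 4 * α) by ring, rpow_add hT0 (5 * α)]
        field_simp

theorem exists_norm_iteratedDeriv_logDeriv_riemannZeta₁_le (k : ℕ) :
    ∃ C > 0, ∀ s : ℂ, s.re ∈ Set.Ioc (1 : ℝ) 2 →
      ‖iteratedDeriv k (logDeriv riemannZeta₁) s‖ ≤ C * (3 + |s.im|) := by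
  have : (0 : ℝ) < k + 1 := by positivity
  set α : ℝ := 1 / (5 * (k + 1)) with hα
  have hα0 : 0 < α := by positivity
  have hα1 : α ≤ 1 := (div_le_one (by positivity)).2 (by linarith [k.cast_nonneg (α := ℝ)])
  obtain ⟨C, hC, δ, hδ, hbound⟩ := exists_norm_logDeriv_riemannZeta₁_le ⟨hα0, hα1⟩
  refine ⟨k.factorial * C / δ ^ k, by positivity, fun s hs ↦ ?_⟩
  set T : ℝ := 3 + |s.im|
  have hT0 : 0 < T := by positivity
  have hR : 0 < δ * T ^ (-(5 * α)) := by positivity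
  have hdiff : DiffContOnCl ℂ (logDeriv riemannZeta₁) (Metric.ball s (δ * T ^ (-(5 * α)))) := by
    refine DifferentiableOn.diffContOnCl fun z hz ↦ ?_
    rw [closure_ball s hR.ne', mem_closedBall_iff_norm] at hz
    exact ((differentiable_riemannZeta₁.deriv z).div (differentiable_riemannZeta₁ z)
      (hbound s z hs hz).1).differentiableWithinAt
  have hcauchy := Complex.norm_iteratedDeriv_le_of_forall_mem_sphere_norm_le k hR hdiff
    fun z hz ↦ (hbound s z hs (mem_sphere_iff_norm.1 hz).le).2
  have hTpow : T ^ (5 * α) * (T ^ (5 * α)) ^ k = T := by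
    rw [← pow_succ', ← rpow_natCast, ← rpow_mul hT0.le, hα]
    push_cast
    rw [show 5 * (1 / (5 * ((k : ℝ) + 1))) * (k + 1) = 1 by field_simp, rpow_one]
  refine hcauchy.trans_eq ?_
  calc k.factorial * (C * T ^ (5 * α)) / (δ * T ^ (-(5 * α))) ^ k
      = k.factorial * C / δ ^ k * (T ^ (5 * α) * (T ^ (5 * α)) ^ k) := by
        rw [rpow_neg hT0.le, mul_pow, inv_pow]; field_simp
    _ = k.factorial * C / δ ^ k * T := by rw [hTpow]

end LogDeriv

section VonMangoldtMeasure

open MeasureTheory ProbabilityTheory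
open ArithmeticFunction hiding log

theorem LSeries_vonMangoldt_eq_inv_sub_logDeriv {s : ℂ} (hs : 1 < s.re) :
    LSeries (fun n ↦ (Λ n : ℂ)) s = (s - 1)⁻¹ - logDeriv riemannZeta₁ s := by
  have hs1 : s ≠ 1 := fun h ↦ by simp [h] at hs
  have hsub : s - 1 ≠ 0 := sub_ne_zero.2 hs1
  have hζ : riemannZeta₁ s ≠ 0 := riemannZeta₁_ne_zero_of_one_le_re hs.le
  rw [LSeries_vonMangoldt_eq_deriv_riemannZeta_div hs,
    deriv_riemannZeta_eq_neg_inv_sub_sq_mul_add hs1, riemannZeta_eq_inv_sub_mul hs1, logDeriv_apply]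
  field_simp
  ring

/-- The measure `∑ Λ(n) / n • δ_{log n}` on the real line, whose moment generating function at `z`
is `-ζ'/ζ (1 - z)`. -/
noncomputable def vonMangoldtMeasure : Measure ℝ :=
  Measure.sum fun n : ℕ ↦ ENNReal.ofReal (Λ n / n) • Measure.dirac (log n)

theorem toReal_ofReal_vonMangoldt_div (n : ℕ) : (ENNReal.ofReal (Λ n / n)).toReal = Λ n / n :=
  ENNReal.toReal_ofReal (by positivity)

theorem vonMangoldt_div_mul_cexp_eq_term (z : ℂ) (n : ℕ) :
    ((Λ n / n : ℝ) : ℂ) * Complex.exp (z * log n) = LSeries.term (fun n ↦ (Λ n : ℂ)) (1 - z) n := by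
  rcases eq_or_ne n 0 with rfl | hn
  · simp
  · have hn' : (n : ℂ) ≠ 0 := Nat.cast_ne_zero.2 hn
    rw [LSeries.term_of_ne_zero hn, Complex.cpow_sub _ _ hn', Complex.cpow_one,
      Complex.cpow_def_of_ne_zero hn', Complex.natCast_log, mul_comm z]
    push_cast
    field_simp

theorem one_lt_re_one_sub {z : ℂ} (hz : z.re < 0) : 1 < (1 - z).re := by
  rw [Complex.sub_re, Complex.one_re]
  linarith

theorem summable_vonMangoldt_div_mul_norm_cexp {z : ℂ} (hz : z.re < 0) :
    Summable fun n : ℕ ↦ (ENNReal.ofReal (Λ n / n)).toReal * ‖Complex.exp (z * log n)‖ := by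
  have hsum := (LSeriesSummable_vonMangoldt (one_lt_re_one_sub hz)).norm
  refine hsum.congr fun n ↦ ?_
  rw [← vonMangoldt_div_mul_cexp_eq_term, norm_mul, toReal_ofReal_vonMangoldt_div,
    Complex.norm_real, norm_of_nonneg (by positivity)]

theorem Iio_zero_subset_integrableExpSet_vonMangoldtMeasure :
    Set.Iio 0 ⊆ integrableExpSet id vonMangoldtMeasure := fun c hc ↦
  integrable_sum_dirac (fun _ ↦ ENNReal.ofReal_ne_top) <| by
    simpa [Complex.norm_exp, -Complex.natCast_log] using
      summable_vonMangoldt_div_mul_norm_cexp (z := c) (by simpa using hc)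

theorem complexMGF_vonMangoldtMeasure {z : ℂ} (hz : z.re < 0) :
    complexMGF id vonMangoldtMeasure z = LSeries (fun n ↦ (Λ n : ℂ)) (1 - z) := by
  refine (integral_sum_dirac_eq_tsum (x := fun n : ℕ ↦ log n)
    (f := fun x : ℝ ↦ Complex.exp (z * x)) (fun _ ↦ ENNReal.ofReal_ne_top)
    (summable_vonMangoldt_div_mul_norm_cexp hz)).trans (tsum_congr fun n ↦ ?_)
  rw [toReal_ofReal_vonMangoldt_div, ← vonMangoldt_div_mul_cexp_eq_term, Complex.real_smul]

theorem Iio_zero_subset_integrableExpSet_volume_Ioi :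
    Set.Iio 0 ⊆ integrableExpSet id (volume.restrict (Set.Ioi (0 : ℝ))) := fun _ hc ↦
  integrableOn_exp_mul_Ioi hc 0

theorem complexMGF_volume_Ioi {z : ℂ} (hz : z.re < 0) :
    complexMGF id (volume.restrict (Set.Ioi (0 : ℝ))) z = -z⁻¹ :=
  (integral_exp_mul_complex_Ioi hz 0).trans (by simp [neg_div])

theorem re_mem_interior_integrableExpSet {μ : Measure ℝ} (hμ : Set.Iio 0 ⊆ integrableExpSet id μ)
    {x : ℝ} (hx : x < 0) : x ∈ interior (integrableExpSet id μ) :=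
  interior_maximal hμ isOpen_Iio hx

theorem complexMGF_vonMangoldtMeasure_sub_volume_Ioi {z : ℂ} (hz : z.re < 0) :
    complexMGF id vonMangoldtMeasure z - complexMGF id (volume.restrict (Set.Ioi (0 : ℝ))) z =
      -logDeriv riemannZeta₁ (1 - z) := by
  rw [complexMGF_vonMangoldtMeasure hz, complexMGF_volume_Ioi hz,
    LSeries_vonMangoldt_eq_inv_sub_logDeriv (one_lt_re_one_sub hz)]
  ring_nf

theorem integral_pow_mul_cexp_vonMangoldtMeasure_sub (k : ℕ) {z : ℂ} (hz : z.re < 0) :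
    (∫ x, (x : ℂ) ^ k * Complex.exp (z * x) ∂vonMangoldtMeasure) -
        ∫ x in Set.Ioi (0 : ℝ), (x : ℂ) ^ k * Complex.exp (z * x) =
      -(-1) ^ k * iteratedDeriv k (logDeriv riemannZeta₁) (1 - z) := by
  have hvM : z.re ∈ interior (integrableExpSet id vonMangoldtMeasure) :=
    re_mem_interior_integrableExpSet Iio_zero_subset_integrableExpSet_vonMangoldtMeasure hz
  have hvol : z.re ∈ interior (integrableExpSet id (volume.restrict (Set.Ioi (0 : ℝ)))) :=
    re_mem_interior_integrableExpSet Iio_zero_subset_integrableExpSet_volume_Ioi hz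
  have hdiff : complexMGF id vonMangoldtMeasure - complexMGF id (volume.restrict (Set.Ioi 0))
      =ᶠ[nhds z] fun w ↦ -logDeriv riemannZeta₁ (1 - w) :=
    eventuallyEq_of_mem ((isOpen_Iio.preimage Complex.continuous_re).mem_nhds hz) fun _ ↦
      complexMGF_vonMangoldtMeasure_sub_volume_Ioi
  have hderiv := hdiff.iteratedDeriv_eq k
  rw [iteratedDeriv_sub (analyticAt_complexMGF hvM).contDiffAt
      (analyticAt_complexMGF hvol).contDiffAt, iteratedDeriv_complexMGF hvM,
    iteratedDeriv_complexMGF hvol, iteratedDeriv_fun_neg, iteratedDeriv_comp_const_sub] at hderiv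
  simpa using hderiv

theorem exists_norm_integral_pow_mul_cexp_vonMangoldtMeasure_sub_le (k : ℕ) :
    ∃ C > 0, ∀ z : ℂ, z.re ∈ Set.Ico (-1) 0 →
      ‖(∫ x, (x : ℂ) ^ k * Complex.exp (z * x) ∂vonMangoldtMeasure) -
        ∫ x in Set.Ioi (0 : ℝ), (x : ℂ) ^ k * Complex.exp (z * x)‖ ≤ C * (3 + |z.im|) := by
  obtain ⟨C, hC, hbound⟩ := exists_norm_iteratedDeriv_logDeriv_riemannZeta₁_le k
  refine ⟨C, hC, fun z hz ↦ ?_⟩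
  rw [integral_pow_mul_cexp_vonMangoldtMeasure_sub k hz.2]
  simpa using hbound (1 - z)
    ⟨one_lt_re_one_sub hz.2, by rw [Complex.sub_re, Complex.one_re]; linarith [hz.1]⟩

end VonMangoldtMeasure

section FourierComparison

open MeasureTheory ProbabilityTheory FourierTransform
open scoped SchwartzMap

theorem schwartzMap_eq_integral_fourier (f : 𝓢(ℝ, ℂ)) (x : ℝ) :
    f x = ∫ ξ : ℝ, Complex.exp ((2 * π * ξ * x : ℝ) * Complex.I) * 𝓕 f ξ := by
  have hinv : f x = 𝓕⁻ ((𝓕 f : 𝓢(ℝ, ℂ)) : ℝ → ℂ) x := by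
    rw [← SchwartzMap.fourierInv_coe, fourierInv_fourier_eq]
  rw [hinv, Real.fourierInv_eq']
  simp [mul_assoc, mul_comm, mul_left_comm]

theorem integral_mul_schwartzMap_rescale {μ : Measure ℝ} [SFinite μ] {g : ℝ → ℂ}
    (hg : Integrable g μ) (f : 𝓢(ℝ, ℂ)) (X h : ℝ) :
    Integrable (fun ξ : ℝ ↦ Complex.exp ((-(2 * π * ξ * X / h) : ℝ) * Complex.I) * 𝓕 f ξ *
        ∫ x, g x * Complex.exp ((2 * π * ξ / h * x : ℝ) * Complex.I) ∂μ) ∧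
      ∫ x, g x * f ((x - X) / h) ∂μ =
        ∫ ξ : ℝ, Complex.exp ((-(2 * π * ξ * X / h) : ℝ) * Complex.I) * 𝓕 f ξ *
          ∫ x, g x * Complex.exp ((2 * π * ξ / h * x : ℝ) * Complex.I) ∂μ := by
  set F : ℝ → ℝ → ℂ := fun x ξ ↦
    Complex.exp ((2 * π * ξ * ((x - X) / h) : ℝ) * Complex.I) * (g x * 𝓕 f ξ)
  have hFint : Integrable (Function.uncurry F) (μ.prod volume) :=
    (hg.mul_prod (𝓕 f).integrable).bdd_mul (c := 1)
      (Continuous.aestronglyMeasurable (by fun_prop))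
      (Eventually.of_forall fun _ ↦ (Complex.norm_exp_ofReal_mul_I _).le)
  have hphase (x ξ : ℝ) : Complex.exp ((2 * π * ξ * ((x - X) / h) : ℝ) * Complex.I) =
      Complex.exp ((-(2 * π * ξ * X / h) : ℝ) * Complex.I) *
        Complex.exp ((2 * π * ξ / h * x : ℝ) * Complex.I) := by
    rw [← Complex.exp_add, ← add_mul, ← Complex.ofReal_add]
    ring_nf
  have hinner (ξ : ℝ) : Complex.exp ((-(2 * π * ξ * X / h) : ℝ) * Complex.I) * 𝓕 f ξ *
      ∫ x, g x * Complex.exp ((2 * π * ξ / h * x : ℝ) * Complex.I) ∂μ = ∫ x, F x ξ ∂μ := by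
    rw [← integral_const_mul]
    refine integral_congr_ae (Eventually.of_forall fun x ↦ ?_)
    simp only [F, hphase]
    ring
  simp_rw [hinner]
  refine ⟨hFint.integral_prod_right, ?_⟩
  rw [← integral_integral_swap hFint]
  refine integral_congr_ae (Eventually.of_forall fun x ↦ ?_)
  simp only [F, schwartzMap_eq_integral_fourier f, ← integral_const_mul, mul_left_comm]

theorem exists_norm_integral_mul_schwartzMap_rescale_sub_le (f : 𝓢(ℝ, ℂ)) :
    ∃ K > 0, ∀ (μ ν : Measure ℝ) [SFinite μ] [SFinite ν] (g : ℝ → ℂ) (A : ℝ),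
      Integrable g μ → Integrable g ν →
      (∀ t : ℝ, ‖(∫ x, g x * Complex.exp ((t * x : ℝ) * Complex.I) ∂μ) -
        ∫ x, g x * Complex.exp ((t * x : ℝ) * Complex.I) ∂ν‖ ≤ A * (3 + |t|)) →
      ∀ X h : ℝ, 0 < h →
        ‖(∫ x, g x * f ((x - X) / h) ∂μ) - ∫ x, g x * f ((x - X) / h) ∂ν‖ ≤
          A * K * (1 + 1 / h) := by
  have hint0 : Integrable (fun ξ ↦ ‖𝓕 f ξ‖) := (𝓕 f).integrable.norm
  have hint1 : Integrable (fun ξ ↦ |ξ| * ‖𝓕 f ξ‖) := by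
    simpa only [pow_one, norm_eq_abs] using (𝓕 f : 𝓢(ℝ, ℂ)).integrable_pow_mul volume 1
  set I₀ := ∫ ξ, ‖𝓕 f ξ‖
  set I₁ := ∫ ξ, |ξ| * ‖𝓕 f ξ‖
  have hI₀ : 0 ≤ I₀ := integral_nonneg fun _ ↦ norm_nonneg _
  have hI₁ : 0 ≤ I₁ := integral_nonneg fun _ ↦ by positivity
  refine ⟨3 * I₀ + 2 * π * I₁ + 1, by positivity, fun μ ν _ _ g A hμ hν hbound X h hh ↦ ?_⟩
  have hA : 0 ≤ A := by
    have := (norm_nonneg _).trans (hbound 0)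
    rw [abs_zero, add_zero] at this
    linarith
  obtain ⟨hμint, hμeq⟩ := integral_mul_schwartzMap_rescale hμ f X h
  obtain ⟨hνint, hνeq⟩ := integral_mul_schwartzMap_rescale hν f X h
  rw [hμeq, hνeq, ← integral_sub hμint hνint]
  have hpointwise (ξ : ℝ) :
      ‖Complex.exp ((-(2 * π * ξ * X / h) : ℝ) * Complex.I) * 𝓕 f ξ *
          (∫ x, g x * Complex.exp ((2 * π * ξ / h * x : ℝ) * Complex.I) ∂μ) -
        Complex.exp ((-(2 * π * ξ * X / h) : ℝ) * Complex.I) * 𝓕 f ξ *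
          ∫ x, g x * Complex.exp ((2 * π * ξ / h * x : ℝ) * Complex.I) ∂ν‖ ≤
      3 * A * ‖𝓕 f ξ‖ + A * (2 * π / h) * (|ξ| * ‖𝓕 f ξ‖) := by
    rw [← mul_sub, norm_mul, norm_mul, Complex.norm_exp_ofReal_mul_I, one_mul]
    grw [hbound (2 * π * ξ / h)]
    rw [abs_div, abs_mul, abs_of_pos hh, abs_of_pos two_pi_pos]
    exact (by ring : _ = _).le
  calc _ ≤ ∫ ξ, (3 * A * ‖𝓕 f ξ‖ + A * (2 * π / h) * (|ξ| * ‖𝓕 f ξ‖)) :=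
        norm_integral_le_of_norm_le ((hint0.const_mul _).add (hint1.const_mul _))
          (Eventually.of_forall hpointwise)
    _ = A * (3 * I₀ + 2 * π * I₁ * (1 / h)) := by
        rw [integral_add (hint0.const_mul _) (hint1.const_mul _), integral_const_mul,
          integral_const_mul]
        ring
    _ ≤ A * ((3 * I₀ + 2 * π * I₁ + 1) * (1 + 1 / h)) := by
        have : 0 < 1 / h := by positivity
        gcongr
        nlinarith [mul_nonneg hI₀ this.le, mul_nonneg pi_pos.le hI₁]
    _ = A * (3 * I₀ + 2 * π * I₁ + 1) * (1 + 1 / h) := by ring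

theorem isFiniteMeasureOnCompacts_of_integrable_pos {α : Type*} [TopologicalSpace α]
    [MeasurableSpace α] {μ : Measure α} {g : α → ℝ} (hg : Integrable g μ) (hcont : Continuous g)
    (hpos : ∀ x, 0 < g x) : IsFiniteMeasureOnCompacts μ where
  lt_top_of_isCompact K hK := by
    rcases K.eq_empty_or_nonempty with rfl | hne
    · simp
    · obtain ⟨x, -, hx⟩ := hK.exists_isMinOn hne hcont.continuousOn
      exact (measure_mono hx).trans_lt (hg.measure_ge_lt_top (hpos x))

theorem isFiniteMeasureOnCompacts_of_mem_integrableExpSet {μ : Measure ℝ} {c : ℝ}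
    (hc : c ∈ integrableExpSet id μ) : IsFiniteMeasureOnCompacts μ :=
  isFiniteMeasureOnCompacts_of_integrable_pos (g := fun x ↦ exp (c * x)) hc (by fun_prop)
    fun _ ↦ exp_pos _

theorem continuous_integral_mul_cexp {μ : Measure ℝ} [IsFiniteMeasureOnCompacts μ] {f : ℝ → ℂ}
    (hf : Continuous f) (hsupp : HasCompactSupport f) :
    Continuous fun z : ℂ ↦ ∫ x, f x * Complex.exp (z * x) ∂μ := by
  rw [← continuousOn_univ]
  refine continuousOn_integral_of_compact_support hsupp
    (Continuous.continuousOn (by fun_prop)) fun z x _ hx ↦ ?_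
  rw [image_eq_zero_of_notMem_tsupport hx, zero_mul]

theorem integrable_pow_mul_cexp {μ : Measure ℝ} {z : ℂ}
    (hz : z.re ∈ interior (integrableExpSet id μ)) (k : ℕ) :
    Integrable (fun x : ℝ ↦ (x : ℂ) ^ k * Complex.exp (z * x)) μ := by
  refine (integrable_pow_abs_mul_exp_of_mem_interior_integrableExpSet hz k).mono'
    (Continuous.aestronglyMeasurable (by fun_prop)) (Eventually.of_forall fun x ↦ ?_)
  simp [Complex.norm_exp]

variable {μ ν : Measure ℝ} {k : ℕ} {A : ℝ} (hμ : Set.Iio 0 ⊆ integrableExpSet id μ)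
  (hν : Set.Iio 0 ⊆ integrableExpSet id ν)

variable (hbound : ∀ z : ℂ, z.re ∈ Set.Ico (-1) 0 →
  ‖(∫ x, (x : ℂ) ^ k * Complex.exp (z * x) ∂μ) - ∫ x, (x : ℂ) ^ k * Complex.exp (z * x) ∂ν‖ ≤
    A * (3 + |z.im|))
include hμ hν hbound

theorem exists_norm_integral_pow_mul_rescale_mul_cexp_sub_le [SFinite μ] [SFinite ν]
    (f : 𝓢(ℝ, ℂ)) : ∃ C, ∀ δ ∈ Set.Ico (-1 : ℝ) 0, ∀ X h : ℝ, 0 < h →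
      ‖(∫ x, (x : ℂ) ^ k * f ((x - X) / h) * Complex.exp ((δ : ℂ) * x) ∂μ) -
        ∫ x, (x : ℂ) ^ k * f ((x - X) / h) * Complex.exp ((δ : ℂ) * x) ∂ν‖ ≤
          C * (1 + 1 / h) := by
  obtain ⟨K, -, hK⟩ := exists_norm_integral_mul_schwartzMap_rescale_sub_le f
  refine ⟨A * K, fun δ hδ X h hh ↦ ?_⟩
  simp only [mul_right_comm _ (f _)]
  refine hK μ ν _ A
    (integrable_pow_mul_cexp (z := δ) (re_mem_interior_integrableExpSet hμ hδ.2) k)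
    (integrable_pow_mul_cexp (z := δ) (re_mem_interior_integrableExpSet hν hδ.2) k)
    (fun t ↦ ?_) X h hh
  have hexp (x : ℝ) : (x : ℂ) ^ k * Complex.exp (δ * x) * Complex.exp ((t * x : ℝ) * Complex.I) =
      (x : ℂ) ^ k * Complex.exp ((δ + t * Complex.I) * x) := by
    rw [mul_assoc, ← Complex.exp_add]
    push_cast
    ring_nf
  simp only [hexp]
  simpa using hbound (δ + t * Complex.I) (by simpa using hδ)

theorem exists_norm_integral_pow_mul_rescale_sub_le {f : 𝓢(ℝ, ℂ)} (hf : HasCompactSupport f) :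
    ∃ C, ∀ X h : ℝ, 0 < h →
      ‖(∫ x, (x : ℂ) ^ k * f ((x - X) / h) ∂μ) - ∫ x, (x : ℂ) ^ k * f ((x - X) / h) ∂ν‖ ≤
        C * (1 + 1 / h) := by
  have := isFiniteMeasureOnCompacts_of_mem_integrableExpSet (hμ (Set.mem_Iio.2 neg_one_lt_zero))
  have := isFiniteMeasureOnCompacts_of_mem_integrableExpSet (hν (Set.mem_Iio.2 neg_one_lt_zero))
  obtain ⟨C, hC⟩ := exists_norm_integral_pow_mul_rescale_mul_cexp_sub_le hμ hν hbound f
  refine ⟨C, fun X h hh ↦ ?_⟩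
  have hcont : Continuous fun x : ℝ ↦ (x : ℂ) ^ k * f ((x - X) / h) := by fun_prop
  have hsupp : HasCompactSupport fun x : ℝ ↦ (x : ℂ) ^ k * f ((x - X) / h) :=
    HasCompactSupport.mul_left (f := fun x : ℝ ↦ (x : ℂ) ^ k) (hf.comp_homeomorph
      ((Homeomorph.subRight X).trans (Homeomorph.mulRight₀ h⁻¹ (inv_ne_zero hh.ne'))))
  have hlim := (((continuous_integral_mul_cexp (μ := μ) hcont hsupp).sub
    (continuous_integral_mul_cexp (μ := ν) hcont hsupp)).norm.comp
      Complex.continuous_ofReal).tendsto 0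
  simp only [Function.comp_def, Pi.sub_apply, Complex.ofReal_zero, zero_mul, Complex.exp_zero,
    mul_one] at hlim
  exact le_of_tendsto (hlim.mono_left nhdsWithin_le_nhds)
    (eventually_of_mem (Ico_mem_nhdsLT neg_one_lt_zero) fun δ hδ ↦ hC δ hδ X h hh)

end FourierComparison

section BumpBounds

open MeasureTheory

variable {b : ContDiffBump (0 : ℝ)} {X h : ℝ}

theorem bump_rescale_eq_zero (hh : 0 < h) {x : ℝ}
    (hx : x ∉ Set.Ioc (X - b.rOut * h) (X + b.rOut * h)) : b ((x - X) / h) = 0 := by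
  refine b.zero_of_le_dist ?_
  rw [dist_zero_right, norm_div, norm_of_nonneg hh.le, le_div_iff₀ hh, ← dist_eq_norm, ← not_lt,
    ← Metric.mem_ball, Real.ball_eq_Ioo]
  exact fun hmem ↦ hx (Set.Ioo_subset_Ioc_self hmem)

theorem bump_rescale_eq_one (hh : 0 < h) {x : ℝ}
    (hx : x ∈ Set.Ioc (X - b.rIn * h) (X + b.rIn * h)) : b ((x - X) / h) = 1 := by
  refine b.one_of_mem_closedBall ?_
  rw [mem_closedBall_zero_iff, norm_div, norm_of_nonneg hh.le, div_le_iff₀ hh, ← dist_eq_norm,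
    ← Metric.mem_closedBall, Real.closedBall_eq_Icc]
  exact Set.Ioc_subset_Icc_self hx

theorem pow_mul_bump_rescale_nonneg (hh : 0 < h) (hX : b.rOut * h ≤ X) (k : ℕ) (x : ℝ) :
    0 ≤ x ^ k * b ((x - X) / h) := by
  by_cases hx : x ∈ Set.Ioc (X - b.rOut * h) (X + b.rOut * h)
  · exact mul_nonneg (pow_nonneg ((sub_nonneg.2 hX).trans hx.1.le) k) b.nonneg
  · rw [bump_rescale_eq_zero hh hx, mul_zero]

theorem integrable_pow_mul_bump_rescale (μ : Measure ℝ) [IsFiniteMeasureOnCompacts μ]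
    (hh : 0 < h) (k : ℕ) : Integrable (fun x ↦ x ^ k * b ((x - X) / h)) μ := by
  refine Continuous.integrable_of_hasCompactSupport ?_ ?_
  · have := b.continuous
    fun_prop
  · exact HasCompactSupport.mul_left (f := fun x : ℝ ↦ x ^ k) (b.hasCompactSupport.comp_homeomorph
      ((Homeomorph.subRight X).trans (Homeomorph.mulRight₀ h⁻¹ (inv_ne_zero hh.ne'))))

theorem integral_pow_mul_bump_rescale_le (μ : Measure ℝ) [IsFiniteMeasureOnCompacts μ]
    (hh : 0 < h) (hX : b.rOut * h ≤ X) (k : ℕ) :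
    ∫ x, x ^ k * b ((x - X) / h) ∂μ ≤
      (X + b.rOut * h) ^ k * μ.real (Set.Ioc (X - b.rOut * h) (X + b.rOut * h)) := by
  rw [mul_comm, ← smul_eq_mul, ← setIntegral_const,
    ← setIntegral_eq_integral_of_forall_compl_eq_zero fun x hx ↦ by
      rw [bump_rescale_eq_zero hh hx, mul_zero]]
  refine setIntegral_mono_on (integrable_pow_mul_bump_rescale μ hh k).integrableOn
    (integrableOn_const measure_Ioc_lt_top.ne) measurableSet_Ioc fun x hx ↦ ?_
  have hx0 : 0 ≤ x := (sub_nonneg.2 hX).trans hx.1.le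
  exact (mul_le_of_le_one_right (pow_nonneg hx0 k) b.le_one).trans (pow_le_pow_left₀ hx0 hx.2 k)

theorem le_integral_pow_mul_bump_rescale (μ : Measure ℝ) [IsFiniteMeasureOnCompacts μ]
    (hh : 0 < h) (hX : b.rOut * h ≤ X) (k : ℕ) :
    (X - b.rIn * h) ^ k * μ.real (Set.Ioc (X - b.rIn * h) (X + b.rIn * h)) ≤
      ∫ x, x ^ k * b ((x - X) / h) ∂μ := by
  rw [mul_comm, ← smul_eq_mul, ← setIntegral_const]
  have hint := integrable_pow_mul_bump_rescale (b := b) (X := X) μ hh k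
  refine (setIntegral_mono_on (integrableOn_const measure_Ioc_lt_top.ne) hint.integrableOn
    measurableSet_Ioc fun x hx ↦ ?_).trans (setIntegral_le_integral hint
      (Eventually.of_forall (pow_mul_bump_rescale_nonneg hh hX k)))
  rw [bump_rescale_eq_one hh hx, mul_one]
  have := mul_le_mul_of_nonneg_right b.rIn_lt_rOut.le hh.le
  exact pow_le_pow_left₀ (by linarith) hx.1.le k

end BumpBounds

section VonMangoldtWindow

open MeasureTheory

theorem exists_abs_integral_pow_mul_bump_rescale_sub_le (b : ContDiffBump (0 : ℝ)) (k : ℕ) :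
    ∃ C ≥ 0, ∀ X h : ℝ, 0 < h →
      |(∫ x, x ^ k * b ((x - X) / h) ∂vonMangoldtMeasure) -
        ∫ x in Set.Ioi (0 : ℝ), x ^ k * b ((x - X) / h)| ≤ C * (1 + 1 / h) := by
  have hcont : ContDiff ℝ (↑(⊤ : ℕ∞)) fun x ↦ (b x : ℂ) :=
    Complex.ofRealCLM.contDiff.comp b.contDiff
  have hsupp : HasCompactSupport fun x ↦ (b x : ℂ) :=
    b.hasCompactSupport.comp_left Complex.ofReal_zero
  obtain ⟨A, -, hA⟩ := exists_norm_integral_pow_mul_cexp_vonMangoldtMeasure_sub_le k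
  obtain ⟨C, hC⟩ := exists_norm_integral_pow_mul_rescale_sub_le
    Iio_zero_subset_integrableExpSet_vonMangoldtMeasure
    Iio_zero_subset_integrableExpSet_volume_Ioi hA (f := hsupp.toSchwartzMap hcont) hsupp
  have hreal (μ : Measure ℝ) (X h : ℝ) :
      ∫ x, (x : ℂ) ^ k * hsupp.toSchwartzMap hcont ((x - X) / h) ∂μ =
        (∫ x, x ^ k * b ((x - X) / h) ∂μ : ℝ) := by
    rw [← integral_complex_ofReal]
    push_cast
    rfl
  simp only [hreal, ← Complex.ofReal_sub, Complex.norm_real, norm_eq_abs] at hC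
  refine ⟨C, ?_, hC⟩
  linarith [(abs_nonneg _).trans (hC 0 1 one_pos)]

theorem volume_restrict_Ioi_real_Ioc {x y : ℝ} (hx : 0 ≤ x) (hxy : x ≤ y) :
    (volume.restrict (Set.Ioi 0)).real (Set.Ioc x y) = y - x := by
  rw [measureReal_restrict_apply measurableSet_Ioc, Set.Ioc_inter_Ioi, sup_of_le_left hx,
    volume_real_Ioc_of_le hxy]

theorem exists_pow_mul_vonMangoldtMeasure_real_Ioc_bounds (k : ℕ) :
    ∃ C ≥ 0, ∀ Y h : ℝ, 0 < h → h ≤ Y →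
      Y ^ k * (h / 2) ≤ (Y + h) ^ k * vonMangoldtMeasure.real (Set.Ioc Y (Y + h)) +
        C * (1 + 1 / h) ∧
      Y ^ k * vonMangoldtMeasure.real (Set.Ioc Y (Y + h)) ≤ (Y + 2 * h) ^ k * (2 * h) +
        C * (1 + 1 / h) := by
  let b : ContDiffBump (0 : ℝ) := ⟨1 / 4, 1 / 2, by norm_num, by norm_num⟩
  obtain ⟨C, hC0, hC⟩ := exists_abs_integral_pow_mul_bump_rescale_sub_le b k
  have := isFiniteMeasureOnCompacts_of_mem_integrableExpSet
    (Iio_zero_subset_integrableExpSet_vonMangoldtMeasure (Set.mem_Iio.2 neg_one_lt_zero))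
  refine ⟨C, hC0, fun Y h hh hY ↦ ⟨?_, ?_⟩⟩
  · have hX : b.rOut * h ≤ Y + h / 2 := by simp only [b]; linarith
    have hlower := le_integral_pow_mul_bump_rescale (volume.restrict (Set.Ioi 0)) hh hX k
    have hupper := integral_pow_mul_bump_rescale_le vonMangoldtMeasure hh hX k
    have hcompare := (abs_le.1 (hC (Y + h / 2) h hh)).1
    rw [volume_restrict_Ioi_real_Ioc (by simp only [b]; linarith) (by simp only [b]; linarith)]
      at hlower
    have hleft : Y + h / 2 - b.rOut * h = Y := by simp only [b]; ring
    have hright : Y + h / 2 + b.rOut * h = Y + h := by simp only [b]; ring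
    rw [hleft, hright] at hupper
    have hinner : Y ^ k * (h / 2) ≤ (Y + h / 2 - b.rIn * h) ^ k *
        (Y + h / 2 + b.rIn * h - (Y + h / 2 - b.rIn * h)) := by
      simp only [b]
      refine mul_le_mul (pow_le_pow_left₀ ?_ ?_ k) ?_ ?_ (pow_nonneg ?_ k) <;> linarith
    linarith
  · have hX : b.rOut * (2 * h) ≤ Y + h / 2 := by simp only [b]; linarith
    have h2 : 0 < 2 * h := by positivity
    have hlower := le_integral_pow_mul_bump_rescale vonMangoldtMeasure h2 hX k
    have hupper := integral_pow_mul_bump_rescale_le (volume.restrict (Set.Ioi 0)) h2 hX k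
    have hcompare := (abs_le.1 (hC (Y + h / 2) (2 * h) h2)).2
    rw [volume_restrict_Ioi_real_Ioc (by simp only [b]; linarith) (by simp only [b]; linarith)]
      at hupper
    have hleft : Y + h / 2 - b.rIn * (2 * h) = Y := by simp only [b]; ring
    have hright : Y + h / 2 + b.rIn * (2 * h) = Y + h := by simp only [b]; ring
    rw [hleft, hright] at hlower
    have houter : (Y + h / 2 + b.rOut * (2 * h)) ^ k *
        (Y + h / 2 + b.rOut * (2 * h) - (Y + h / 2 - b.rOut * (2 * h))) ≤
          (Y + 2 * h) ^ k * (2 * h) := by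
      simp only [b]
      refine mul_le_mul (pow_le_pow_left₀ ?_ ?_ k) ?_ ?_ (pow_nonneg ?_ k) <;> linarith
    have herror : C * (1 + 1 / (2 * h)) ≤ C * (1 + 1 / h) := by gcongr; linarith
    linarith

theorem exists_forall_vonMangoldtMeasure_real_Ioc_mem_Icc (H : ℝ) :
    ∃ K ≥ max 1 H, ∀ Y h : ℝ, 0 < h → h ≤ H → K ≤ Y → K ≤ Y * h →
      vonMangoldtMeasure.real (Set.Ioc Y (Y + h)) ∈ Set.Icc (h / 16) (19 * h) := by
  obtain ⟨C, hC0, hC⟩ := exists_pow_mul_vonMangoldtMeasure_real_Ioc_bounds 2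
  refine ⟨max (max 1 H) (4 * C * (H + 1)), le_max_left _ _, fun Y h hh hhH hY hYh ↦ ?_⟩
  simp only [max_le_iff] at hY hYh
  obtain ⟨⟨hY1, hHY⟩, -⟩ := hY
  obtain ⟨⟨hYh1, -⟩, hCYh⟩ := hYh
  have hhY : h ≤ Y := hhH.trans hHY
  have hY2 : 0 < Y ^ 2 := by positivity
  have herror : C * (1 + 1 / h) ≤ Y ^ 2 * (h / 4) := by
    calc C * (1 + 1 / h) = C * (h + 1) / h := by field_simp
      _ ≤ C * (H + 1) / h := by gcongr
      _ ≤ (Y * h) ^ 2 / 4 / h := by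
          gcongr
          nlinarith
      _ = Y ^ 2 * (h / 4) := by field_simp
  obtain ⟨hlower, hupper⟩ := hC Y h hh hhY
  constructor
  · refine le_of_mul_le_mul_left ?_ (by positivity : 0 < 4 * Y ^ 2)
    have : (Y + h) ^ 2 * vonMangoldtMeasure.real (Set.Ioc Y (Y + h)) ≤
        (2 * Y) ^ 2 * vonMangoldtMeasure.real (Set.Ioc Y (Y + h)) := by
      gcongr
      linarith
    linarith
  · refine le_of_mul_le_mul_left ?_ hY2
    have : (Y + 2 * h) ^ 2 * (2 * h) ≤ (3 * Y) ^ 2 * (2 * h) := by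
      gcongr
      linarith
    nlinarith

end VonMangoldtWindow

section PrimeReciprocals

open MeasureTheory
open ArithmeticFunction hiding log
open scoped Chebyshev

variable {x y : ℝ}

theorem log_natCast_mem_Ioc_iff {n : ℕ} (hn : n ≠ 0) :
    log n ∈ Set.Ioc x y ↔ n ∈ Finset.Ioc ⌊exp x⌋₊ ⌊exp y⌋₊ := by
  have hpos : (0 : ℝ) < n := Nat.cast_pos.2 (Nat.pos_of_ne_zero hn)
  rw [Set.mem_Ioc, Finset.mem_Ioc, lt_log_iff_exp_lt hpos, log_le_iff_le_exp hpos,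
    Nat.floor_lt (exp_pos x).le, Nat.le_floor_iff (exp_pos y).le]

theorem log_prime_mem_Ioc {p : ℕ}
    (hp : p ∈ {p ∈ Finset.Ioc ⌊exp x⌋₊ ⌊exp y⌋₊ | p.Prime}) : log p ∈ Set.Ioc x y :=
  (log_natCast_mem_Ioc_iff (Finset.mem_filter.1 hp).2.ne_zero).2 (Finset.mem_filter.1 hp).1

theorem vonMangoldtMeasure_real_Ioc (x y : ℝ) :
    vonMangoldtMeasure.real (Set.Ioc x y) = ∑ n ∈ Finset.Ioc ⌊exp x⌋₊ ⌊exp y⌋₊, Λ n / n := by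
  have hterm (n : ℕ) : (ENNReal.ofReal (Λ n / n) • Measure.dirac (log n)) (Set.Ioc x y) =
      if n ∈ Finset.Ioc ⌊exp x⌋₊ ⌊exp y⌋₊ then ENNReal.ofReal (Λ n / n) else 0 := by
    rcases eq_or_ne n 0 with rfl | hn
    · simp
    · simp [Measure.dirac_apply' _ measurableSet_Ioc, Set.indicator_apply,
        log_natCast_mem_Ioc_iff hn]
  rw [measureReal_def, vonMangoldtMeasure, Measure.sum_apply _ measurableSet_Ioc]
  simp only [hterm]
  rw [tsum_eq_sum (s := Finset.Ioc ⌊exp x⌋₊ ⌊exp y⌋₊) fun n hn ↦ if_neg hn,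
    Finset.sum_ite_mem, Finset.inter_self, ENNReal.toReal_sum fun _ _ ↦ ENNReal.ofReal_ne_top]
  simp only [toReal_ofReal_vonMangoldt_div]

theorem mul_sum_primes_inv_le_vonMangoldtMeasure_real_Ioc (x y : ℝ) :
    x * ∑ p ∈ Finset.Ioc ⌊exp x⌋₊ ⌊exp y⌋₊ with p.Prime, (1 : ℝ) / p ≤
      vonMangoldtMeasure.real (Set.Ioc x y) := by
  rw [vonMangoldtMeasure_real_Ioc, Finset.mul_sum]
  refine (Finset.sum_le_sum fun p hp ↦ ?_).trans
    (Finset.sum_le_sum_of_subset_of_nonneg (Finset.filter_subset _ _) fun n _ _ ↦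
      div_nonneg vonMangoldt_nonneg n.cast_nonneg)
  rw [vonMangoldt_apply_prime (Finset.mem_filter.1 hp).2, mul_one_div]
  gcongr
  exact (log_prime_mem_Ioc hp).1.le

theorem sum_not_prime_vonMangoldt_div_le (x y : ℝ) :
    ∑ n ∈ Finset.Ioc ⌊exp x⌋₊ ⌊exp y⌋₊ with ¬ n.Prime, Λ n / n ≤
      exp (-x) * (ψ (exp y) - θ (exp y)) := by
  calc ∑ n ∈ Finset.Ioc ⌊exp x⌋₊ ⌊exp y⌋₊ with ¬ n.Prime, Λ n / n
      ≤ ∑ n ∈ Finset.Ioc ⌊exp x⌋₊ ⌊exp y⌋₊ with ¬ n.Prime, exp (-x) * Λ n := by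
        refine Finset.sum_le_sum fun n hn ↦ ?_
        have hxn := (Nat.floor_lt (exp_pos x).le).1 (Finset.mem_Ioc.1 (Finset.mem_filter.1 hn).1).1
        rw [exp_neg, inv_mul_eq_div]
        gcongr
    _ ≤ ∑ n ∈ Finset.Ioc 0 ⌊exp y⌋₊ with ¬ n.Prime, exp (-x) * Λ n := by
        refine Finset.sum_le_sum_of_subset_of_nonneg ?_ fun n _ _ ↦ by positivity
        gcongr
        exact Nat.zero_le _
    _ = exp (-x) * (ψ (exp y) - θ (exp y)) := by
        rw [Chebyshev.psi_sub_theta_eq_sum_not_prime, Finset.mul_sum]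

theorem vonMangoldtMeasure_real_Ioc_le (x y : ℝ) :
    vonMangoldtMeasure.real (Set.Ioc x y) ≤
      y * ∑ p ∈ Finset.Ioc ⌊exp x⌋₊ ⌊exp y⌋₊ with p.Prime, (1 : ℝ) / p +
        exp (-x) * (ψ (exp y) - θ (exp y)) := by
  rw [vonMangoldtMeasure_real_Ioc, ← Finset.sum_filter_add_sum_filter_not _ Nat.Prime,
    Finset.mul_sum]
  refine add_le_add (Finset.sum_le_sum fun p hp ↦ ?_) (sum_not_prime_vonMangoldt_div_le x y)
  rw [vonMangoldt_apply_prime (Finset.mem_filter.1 hp).2, mul_one_div]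
  gcongr
  exact (log_prime_mem_Ioc hp).2

theorem exists_exp_neg_mul_psi_sub_theta_le (H : ℝ) : ∃ C, ∀ Y h : ℝ, 0 < Y → h ≤ H →
    exp (-Y) * (ψ (exp (Y + h)) - θ (exp (Y + h))) ≤ C / Y ^ 2 := by
  obtain ⟨C, hC⟩ := Chebyshev.psi_sub_theta_le_mul_sqrt
  refine ⟨8 * |C| * exp (H / 2), fun Y h hY hh ↦ ?_⟩
  have hexp : Y ^ 2 / 8 ≤ exp (Y / 2) := by
    have := quadratic_le_exp_of_nonneg (by positivity : 0 ≤ Y / 2)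
    nlinarith
  calc exp (-Y) * (ψ (exp (Y + h)) - θ (exp (Y + h)))
      ≤ exp (-Y) * (|C| * exp ((Y + h) / 2)) := by
        grw [hC, le_abs_self C, exp_half]
    _ = |C| * exp (h / 2) / exp (Y / 2) := by
        rw [mul_left_comm, ← exp_add, mul_div_assoc, ← exp_sub]
        ring_nf
    _ ≤ |C| * exp (H / 2) / (Y ^ 2 / 8) := by gcongr
    _ = 8 * |C| * exp (H / 2) / Y ^ 2 := by field_simp

theorem exists_forall_sum_primes_inv_mem_Icc (H : ℝ) : ∃ K > 0, ∀ Y h : ℝ, 0 < h → h ≤ H → K ≤ Y →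
    K ≤ Y * h → ∑ p ∈ Finset.Ioc ⌊exp Y⌋₊ ⌊exp (Y + h)⌋₊ with p.Prime, (1 : ℝ) / p ∈
      Set.Icc (1 / 64 * (h / Y)) (19 * (h / Y)) := by
  obtain ⟨K, hK, hwindow⟩ := exists_forall_vonMangoldtMeasure_real_Ioc_mem_Icc H
  obtain ⟨C, hC⟩ := exists_exp_neg_mul_psi_sub_theta_le H
  have hK1 : 1 ≤ K := (le_max_left _ _).trans hK
  refine ⟨max K (32 * C), by positivity, fun Y h hh hhH hY hYh ↦ ?_⟩
  rw [max_le_iff] at hY hYh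
  have hY0 : 0 < Y := by linarith
  have hhY : h ≤ Y := hhH.trans ((le_max_right _ _).trans (hK.trans hY.1))
  obtain ⟨hlower, hupper⟩ := hwindow Y h hh hhH hY.1 hYh.1
  set S := ∑ p ∈ Finset.Ioc ⌊exp Y⌋₊ ⌊exp (Y + h)⌋₊ with p.Prime, (1 : ℝ) / p
  have : 0 ≤ S := Finset.sum_nonneg fun _ _ ↦ by positivity
  constructor
  · have hprimePowers : C / Y ^ 2 ≤ h / 32 := by
      rw [div_le_iff₀ (by positivity)]
      nlinarith
    have hprimes : (Y + h) * S ≤ 2 * Y * S := by gcongr; linarith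
    have := vonMangoldtMeasure_real_Ioc_le Y (Y + h)
    rw [← mul_div_assoc, div_le_iff₀ hY0]
    linarith [hC Y h hY0 hhH]
  · rw [← mul_div_assoc, le_div_iff₀ hY0, mul_comm]
    exact (mul_sum_primes_inv_le_vonMangoldtMeasure_real_Ioc Y (Y + h)).trans hupper

end PrimeReciprocals

section PrimeWindows

theorem filter_range_prime_exp_eq (x y : ℝ) :
    ((Finset.range (⌊exp y⌋₊ + 1)).filter fun p : ℕ ↦ p.Prime ∧ exp x < p ∧ (p : ℝ) ≤ exp y) =
      {p ∈ Finset.Ioc ⌊exp x⌋₊ ⌊exp y⌋₊ | p.Prime} := by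
  ext p
  simp only [Finset.mem_filter, Finset.mem_range, Finset.mem_Ioc, Nat.floor_lt (exp_pos x).le,
    ← Nat.le_floor_iff (exp_pos y).le, Nat.lt_succ_iff]
  tauto

theorem eventually_natCast_add_mem_Icc (a : ℝ) :
    ∀ᶠ n : ℕ in atTop, (n : ℝ) + a ∈ Set.Icc ((n : ℝ) / 2) (2 * n) := by
  filter_upwards [tendsto_natCast_atTop_atTop.eventually_ge_atTop (2 * |a|)] with n hn
  constructor <;> linarith [neg_abs_le a, le_abs_self a, abs_nonneg a]

theorem div_mem_Icc_of_mem_Icc {r s t : ℝ} (hr : 0 ≤ r) (hs : 0 < s)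
    (ht : t ∈ Set.Icc (s / 2) (2 * s)) : r / t ∈ Set.Icc (r / s / 2) (2 * (r / s)) := by
  have ht0 : 0 < t := (half_pos hs).trans_le ht.1
  constructor
  · calc r / s / 2 = r / (2 * s) := by field_simp
      _ ≤ r / t := div_le_div_of_nonneg_left hr ht0 ht.2
  · calc r / t ≤ r / (s / 2) := div_le_div_of_nonneg_left hr (half_pos hs) ht.1
      _ = 2 * (r / s) := by field_simp

end PrimeWindows

theorem stmt1_general {ε : ℕ → ℝ} (hε : IsBoundedUnder (· ≤ ·) atTop ε)
    (hnε : Tendsto (fun n : ℕ ↦ (n : ℝ) * ε n) atTop atTop) (a : ℝ) {t₀ : ℝ} (ht₀ : 0 < t₀) :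
    ∃ c₁ c₂ : ℝ, 0 < c₁ ∧ c₁ ≤ c₂ ∧ ∃ N : ℕ, ∀ n ≥ N,
      c₁ * ε n / n ≤
        (∑ p ∈ (Finset.range (⌊exp ((n + a + ε n) / t₀)⌋₊ + 1)).filter
            (fun p : ℕ ↦ p.Prime ∧ exp ((n + a) / t₀) < p ∧ (p : ℝ) ≤ exp ((n + a + ε n) / t₀)),
          (1 : ℝ) / p) ∧
      (∑ p ∈ (Finset.range (⌊exp ((n + a + ε n) / t₀)⌋₊ + 1)).filter
            (fun p : ℕ ↦ p.Prime ∧ exp ((n + a) / t₀) < p ∧ (p : ℝ) ≤ exp ((n + a + ε n) / t₀)),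
          (1 : ℝ) / p) ≤ c₂ * ε n / n := by
  obtain ⟨B, hB⟩ := hε
  obtain ⟨K, hK, hwindow⟩ := exists_forall_sum_primes_inv_mem_Icc (B / t₀)
  refine ⟨1 / 128, 38, by norm_num, by norm_num, eventually_atTop.1 ?_⟩
  filter_upwards [eventually_map.1 hB, eventually_natCast_add_mem_Icc a,
    tendsto_natCast_atTop_atTop.eventually_ge_atTop (2 * (K * t₀)),
    hnε.eventually_ge_atTop (2 * (K * t₀ ^ 2))] with n hεB hna hn hnεn
  have hn0 : (0 : ℝ) < n := lt_of_lt_of_le (by positivity) hn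
  have hε0 : 0 < ε n := pos_of_mul_pos_right (lt_of_lt_of_le (by positivity) hnεn) hn0.le
  have hY : K ≤ (n + a) / t₀ := by
    rw [le_div_iff₀ ht₀]
    linarith [hna.1]
  have hYh : K ≤ (n + a) / t₀ * (ε n / t₀) := by
    rw [div_mul_div_comm, ← sq, le_div_iff₀ (by positivity)]
    linarith [mul_le_mul_of_nonneg_right hna.1 hε0.le]
  have hsum := hwindow _ _ (div_pos hε0 ht₀) (div_le_div_of_nonneg_right hεB ht₀.le) hY hYh
  have hratio := div_mem_Icc_of_mem_Icc hε0.le hn0 hna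
  rw [← add_div, div_div_div_cancel_right₀ ht₀.ne', ← filter_range_prime_exp_eq] at hsum
  rw [mul_div_assoc, mul_div_assoc]
  constructor <;> linarith [hsum.1, hsum.2, hratio.1, hratio.2]

theorem stmt1
    (ε : ℕ → ℝ) (hε : ∀ n, ε n ∈ Set.Ioo (0:ℝ) 1)
    (hε0 : Tendsto ε atTop (nhds 0))
    (hnε : Tendsto (fun n : ℕ => (n : ℝ) * ε n) atTop atTop)
    (a t₀ : ℝ) (ht₀ : 0 < t₀) :
    ∃ c₁ c₂ : ℝ, 0 < c₁ ∧ c₁ ≤ c₂ ∧ ∃ N : ℕ, ∀ n ≥ N,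
      c₁ * ε n / n ≤
        (∑ p ∈ (Finset.range (⌊Real.exp (((n : ℝ) + a + ε n) / t₀)⌋₊ + 1)).filter
            (fun p : ℕ => p.Prime ∧ Real.exp (((n : ℝ) + a) / t₀) < (p : ℝ)
              ∧ (p : ℝ) ≤ Real.exp (((n : ℝ) + a + ε n) / t₀)),
          (1 : ℝ) / p) ∧
      (∑ p ∈ (Finset.range (⌊Real.exp (((n : ℝ) + a + ε n) / t₀)⌋₊ + 1)).filter
            (fun p : ℕ => p.Prime ∧ Real.exp (((n : ℝ) + a) / t₀) < (p : ℝ)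
              ∧ (p : ℝ) ≤ Real.exp (((n : ℝ) + a + ε n) / t₀)),
          (1 : ℝ) / p) ≤ c₂ * ε n / n :=
  stmt1_general hε0.isBoundedUnder_le hnε a ht₀
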